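/- Let U ⊆ ℝ² be open, Γ a torsion-free affine connection on U with projective Schouten tensor P, and Λ ≠ 0 a real number. On M = U×ℝ² with coordinates (x¹,x²,ξ₁,ξ₂) define the metric g by g(∂_{ξ_i},∂_{x^j}) = g(∂_{x^j},∂_{ξ_i}) = ½δ_{ij}, g(∂_{x^i},∂_{x^j}) = −Σ_k Γ^k_{ij}ξ_k + Λξ_iξ_j + Λ^{-1}P_{(ij)}, g(∂_{ξ_i},∂_{ξ_j}) = 0 (the metric g = (dξ_i − (Γ^k_{ij}ξ_k − Λξ_iξ_j − Λ^{-1}P_{ji})dx^j)⊙dx^i, with a⊙b = ½(a⊗b+b⊗a)). Then g is everywhere nondegenerate, and its Ricci tensor (defined by the standard coordinate formulas) satisfies Ric(g) = 6Λ·g at every point of M; in particular g is an Einstein metric with nonzero constant scalar curvature 24Λ. -/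

import Mathlib

noncomputable section
open Matrix

/-- Points of the plane. -/
abbrev Pt2 : Type := Fin 2 → ℝ
/-- Points of the 4-manifold `U × ℝ²`, coordinates `(x¹, x², ξ₁, ξ₂)`. -/
abbrev Pt4 : Type := Fin 4 → ℝ

/-- Partial derivative of a function on the plane. -/
def pd2 (i : Fin 2) (f : Pt2 → ℝ) (x : Pt2) : ℝ := fderiv ℝ f x (Pi.single i 1)
/-- Partial derivative of a function on `ℝ⁴`. -/
def pd4 (a : Fin 4) (f : Pt4 → ℝ) (p : Pt4) : ℝ := fderiv ℝ f p (Pi.single a 1)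

/-- Base point `(x¹,x²)` of a point of `U × ℝ²`. -/
def bpt (p : Pt4) : Pt2 := ![p 0, p 1]
/-- Fibre coordinates `(ξ₁,ξ₂)` of a point of `U × ℝ²`. -/
def fib (p : Pt4) : Fin 2 → ℝ := ![p 2, p 3]

/-- An affine connection: `conn k i j` is the Christoffel symbol `Γ^k_{ij}`. -/
abbrev Conn : Type := Fin 2 → Fin 2 → Fin 2 → Pt2 → ℝ

/-- Curvature `R_{ij}{}^k{}_l` of a connection. -/
def curv (Γ : Conn) (i j k l : Fin 2) (x : Pt2) : ℝ :=
  pd2 i (Γ k j l) x - pd2 j (Γ k i l) x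
    + ∑ m, (Γ k i m x * Γ m j l x - Γ k j m x * Γ m i l x)

/-- Ricci tensor `R_{jl} = R_{kj}{}^k{}_l`. -/
def ricciT (Γ : Conn) (j l : Fin 2) (x : Pt2) : ℝ := ∑ k, curv Γ k j k l x

/-- Projective Schouten tensor `P_{ij} = R_{(ij)} + (1/3) R_{[ij]}`. -/
def schouten (Γ : Conn) (i j : Fin 2) (x : Pt2) : ℝ :=
  (ricciT Γ i j x + ricciT Γ j i x) / 2 + (ricciT Γ i j x - ricciT Γ j i x) / 6

/-- The one-parameter family of Einstein lift metrics
`g = (dξ_i − (Γ^k_{ij}ξ_k − Λξ_iξ_j − Λ⁻¹P_{ji})dx^j)⊙dx^i`: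
`g(∂_{ξ_i},∂_{x^j}) = ½δ_{ij}`, `g(∂_{x^i},∂_{x^j}) = −Σ_k Γ^k_{ij}ξ_k + Λξ_iξ_j + Λ⁻¹P_{(ij)}`,
`g(∂_{ξ_i},∂_{ξ_j}) = 0`. -/
def einsteinLift (Γ : Conn) (Λ : ℝ) (p : Pt4) : Matrix (Fin 4) (Fin 4) ℝ :=
  let A : Fin 2 → Fin 2 → ℝ := fun i j =>
    -(∑ k, Γ k i j (bpt p) * fib p k) + Λ * fib p i * fib p j
      + Λ⁻¹ * ((schouten Γ i j (bpt p) + schouten Γ j i (bpt p)) / 2)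
  !![A 0 0, A 0 1, 1/2, 0;
     A 1 0, A 1 1, 0, 1/2;
     1/2, 0, 0, 0;
     0, 1/2, 0, 0]

/-- Christoffel symbols `Γ^a_{bc} = ½ Σ_d g^{ad}(∂_b g_{dc} + ∂_c g_{bd} − ∂_d g_{bc})`
of a metric on an open subset of `ℝ⁴`. -/
def chris4 (g : Pt4 → Matrix (Fin 4) (Fin 4) ℝ) (a b c : Fin 4) (p : Pt4) : ℝ :=
  (1/2) * ∑ d, (g p)⁻¹ a d *
    (pd4 b (fun q => g q d c) p + pd4 c (fun q => g q b d) p - pd4 d (fun q => g q b c) p)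

/-- Ricci tensor `Ric_{bd} = Σ_a ∂_aΓ^a_{bd} − ∂_bΓ^a_{ad} + Σ_{a,c}(Γ^a_{ac}Γ^c_{bd} − Γ^a_{bc}Γ^c_{ad})`
of a metric on an open subset of `ℝ⁴`. -/
def ric4 (g : Pt4 → Matrix (Fin 4) (Fin 4) ℝ) (b d : Fin 4) (p : Pt4) : ℝ :=
  (∑ a, (pd4 a (fun q => chris4 g a b d q) p - pd4 b (fun q => chris4 g a a d q) p))
    + ∑ a, ∑ c, (chris4 g a a c p * chris4 g c b d p - chris4 g a b c p * chris4 g c a d p)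

set_option linter.unusedSimpArgs false

/-! ### Helper material -/

/-- Base index. -/
def ex4 (i : Fin 2) : Fin 4 := ![0, 1] i
/-- Fibre index. -/
def ef4 (i : Fin 2) : Fin 4 := ![2, 3] i

/-- Kronecker delta. -/
def kd (i j : Fin 2) : ℝ := if i = j then 1 else 0

/-- Differentiability together with the values of all partial derivatives. -/
structure HasPD (f : Pt4 → ℝ) (u v : Fin 2 → ℝ) (p : Pt4) : Prop where
  diff : DifferentiableAt ℝ f p
  base : ∀ i, pd4 (ex4 i) f p = u i
  fibre : ∀ i, pd4 (ef4 i) f p = v i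

lemma HasPD.congr' {f : Pt4 → ℝ} {u v u' v' : Fin 2 → ℝ} {p : Pt4} (h : HasPD f u v p)
    (hu : ∀ i, u i = u' i) (hv : ∀ i, v i = v' i) : HasPD f u' v' p :=
  ⟨h.diff, fun i => (h.base i).trans (hu i), fun i => (h.fibre i).trans (hv i)⟩

lemma HasPD.add {f g : Pt4 → ℝ} {u v u' v' : Fin 2 → ℝ} {p : Pt4} (hf : HasPD f u v p)
    (hg : HasPD g u' v' p) :
    HasPD (fun q => f q + g q) (fun i => u i + u' i) (fun i => v i + v' i) p := by
  refine ⟨hf.diff.add hg.diff, fun i => ?_, fun i => ?_⟩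
  · rw [← hf.base, ← hg.base]; simp [pd4, fderiv_fun_add hf.diff hg.diff]
  · rw [← hf.fibre, ← hg.fibre]; simp [pd4, fderiv_fun_add hf.diff hg.diff]

lemma HasPD.mul {f g : Pt4 → ℝ} {u v u' v' : Fin 2 → ℝ} {p : Pt4} (hf : HasPD f u v p)
    (hg : HasPD g u' v' p) :
    HasPD (fun q => f q * g q) (fun i => f p * u' i + g p * u i)
      (fun i => f p * v' i + g p * v i) p := by
  refine ⟨hf.diff.mul hg.diff, fun i => ?_, fun i => ?_⟩
  · rw [← hf.base, ← hg.base]; simp [pd4, fderiv_fun_mul hf.diff hg.diff]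
  · rw [← hf.fibre, ← hg.fibre]; simp [pd4, fderiv_fun_mul hf.diff hg.diff]

lemma HasPD.neg {f : Pt4 → ℝ} {u v : Fin 2 → ℝ} {p : Pt4} (hf : HasPD f u v p) :
    HasPD (fun q => - f q) (fun i => - u i) (fun i => - v i) p := by
  refine ⟨hf.diff.neg, fun i => ?_, fun i => ?_⟩
  · rw [← hf.base]; simp [pd4, fderiv_fun_neg]
  · rw [← hf.fibre]; simp [pd4, fderiv_fun_neg]

lemma HasPD.sub {f g : Pt4 → ℝ} {u v u' v' : Fin 2 → ℝ} {p : Pt4} (hf : HasPD f u v p)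
    (hg : HasPD g u' v' p) :
    HasPD (fun q => f q - g q) (fun i => u i - u' i) (fun i => v i - v' i) p := by
  simpa only [sub_eq_add_neg] using hf.add hg.neg

lemma HasPD.const (c : ℝ) (p : Pt4) : HasPD (fun _ => c) (fun _ => 0) (fun _ => 0) p := by
  refine ⟨by fun_prop, fun i => ?_, fun i => ?_⟩ <;> simp [pd4]

lemma HasPD.fib (k : Fin 2) (p : Pt4) :
    HasPD (fun q => fib q k) (fun _ => 0) (fun i => kd i k) p := by
  have h : (fun q : Pt4 => _root_.fib q k) =
      (ContinuousLinearMap.proj (R := ℝ) (φ := fun _ : Fin 4 => ℝ) (ef4 k)) := by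
    funext q; fin_cases k <;> rfl
  rw [h]
  refine ⟨ContinuousLinearMap.differentiableAt _, fun i => ?_, fun i => ?_⟩
  · rw [pd4, ContinuousLinearMap.fderiv]
    fin_cases i <;> fin_cases k <;> simp [ex4, ef4]
  · rw [pd4, ContinuousLinearMap.fderiv]
    fin_cases i <;> fin_cases k <;> simp [ef4, kd]

/-- The projection to the base as a continuous linear map. -/
def bptL : Pt4 →L[ℝ] Pt2 :=
  ContinuousLinearMap.pi fun i =>
    ContinuousLinearMap.proj (R := ℝ) (φ := fun _ : Fin 4 => ℝ) (ex4 i)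

lemma bptL_apply (q : Pt4) : bptL q = bpt q := by
  funext i; fin_cases i <;> rfl

lemma bpt_eq : bpt = bptL := by
  funext q; exact (bptL_apply q).symm

lemma HasPD.base_comp {f : Pt2 → ℝ} {p : Pt4} (hf : DifferentiableAt ℝ f (bpt p)) :
    HasPD (fun q => f (bpt q)) (fun i => pd2 i f (bpt p)) (fun _ => 0) p := by
  rw [bpt_eq] at *
  have h := hf.hasFDerivAt.comp p bptL.hasFDerivAt
  refine ⟨h.differentiableAt, fun i => ?_, fun i => ?_⟩
  · have : bptL (Pi.single (ex4 i) 1) = Pi.single i 1 := by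
      funext j; fin_cases i <;> fin_cases j <;> simp [bptL, ex4]
    have h' := congrArg (fun L => L (Pi.single (ex4 i) (1:ℝ))) h.fderiv
    simpa [pd4, pd2, Function.comp_def, this] using h'
  · have : bptL (Pi.single (ef4 i) 1) = 0 := by
      funext j; fin_cases i <;> fin_cases j <;> simp [bptL, ex4, ef4]
    have h' := congrArg (fun L => L (Pi.single (ef4 i) (1:ℝ))) h.fderiv
    simpa [pd4, pd2, Function.comp_def, this] using h'

lemma HasPD.of_eventuallyEq {f g : Pt4 → ℝ} {u v : Fin 2 → ℝ} {p : Pt4} (hf : HasPD f u v p)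
    (h : g =ᶠ[nhds p] f) : HasPD g u v p := by
  refine ⟨hf.diff.congr_of_eventuallyEq h, fun i => ?_, fun i => ?_⟩
  · rw [← hf.base, pd4, pd4, h.fderiv_eq]
  · rw [← hf.fibre, pd4, pd4, h.fderiv_eq]

/-- The `xx`-block of the metric, with `Q` the `ξ`-free term. -/
def blA (Γ : Conn) (Q : Fin 2 → Fin 2 → Pt2 → ℝ) (Λ : ℝ) (i j : Fin 2) (q : Pt4) : ℝ :=
  -(Γ 0 i j (bpt q) * fib q 0 + Γ 1 i j (bpt q) * fib q 1) + Λ * fib q i * fib q j + Q i j (bpt q)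

/-- Fibre derivatives of `blA`. -/
def blB (Γ : Conn) (Λ : ℝ) (m i j : Fin 2) (q : Pt4) : ℝ :=
  -Γ m i j (bpt q) + Λ * (kd m i * fib q j + kd m j * fib q i)

/-- Base derivatives of `blA`. -/
def blC (Γ : Conn) (Q : Fin 2 → Fin 2 → Pt2 → ℝ) (l i j : Fin 2) (q : Pt4) : ℝ :=
  -(pd2 l (Γ 0 i j) (bpt q) * fib q 0 + pd2 l (Γ 1 i j) (bpt q) * fib q 1)
    + pd2 l (Q i j) (bpt q)

/-- The Christoffel symbol with one upper fibre index and two lower base indices. -/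
def blH (Γ : Conn) (Q : Fin 2 → Fin 2 → Pt2 → ℝ) (Λ : ℝ) (k i j : Fin 2) (q : Pt4) : ℝ :=
  blC Γ Q i k j q + blC Γ Q j i k q - blC Γ Q k i j q
    + 2 * (blA Γ Q Λ k 0 q * blB Γ Λ 0 i j q + blA Γ Q Λ k 1 q * blB Γ Λ 1 i j q)

lemma blA_hasPD {Γ : Conn} {Q : Fin 2 → Fin 2 → Pt2 → ℝ} {Λ : ℝ} {p : Pt4}
    (hΓ : ∀ k i j, DifferentiableAt ℝ (Γ k i j) (bpt p))
    (hQ : ∀ i j, DifferentiableAt ℝ (Q i j) (bpt p)) (i j : Fin 2) :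
    HasPD (blA Γ Q Λ i j) (fun l => blC Γ Q l i j p) (fun m => blB Γ Λ m i j p) p := by
  refine HasPD.congr' (((((HasPD.base_comp (hΓ 0 i j)).mul (HasPD.fib 0 p)).add
    ((HasPD.base_comp (hΓ 1 i j)).mul (HasPD.fib 1 p))).neg.add
    (((HasPD.const Λ p).mul (HasPD.fib i p)).mul (HasPD.fib j p))).add
    (HasPD.base_comp (hQ i j))) ?_ ?_
  · intro l; simp only [blC]; ring
  · intro m; simp only [blB]; fin_cases m <;> fin_cases i <;> fin_cases j <;> simp [kd] <;> ring

lemma blB_hasPD {Γ : Conn} {Λ : ℝ} {p : Pt4}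
    (hΓ : ∀ k i j, DifferentiableAt ℝ (Γ k i j) (bpt p)) (m i j : Fin 2) :
    HasPD (blB Γ Λ m i j) (fun l => -pd2 l (Γ m i j) (bpt p))
      (fun n => Λ * (kd m i * kd n j + kd m j * kd n i)) p := by
  refine HasPD.congr' ((HasPD.base_comp (hΓ m i j)).neg.add
    ((HasPD.const Λ p).mul (((HasPD.const (kd m i) p).mul (HasPD.fib j p)).add
      ((HasPD.const (kd m j) p).mul (HasPD.fib i p))))) ?_ ?_
  · intro l; ring
  · intro n; ring

lemma blC_hasPD {Γ : Conn} {Q : Fin 2 → Fin 2 → Pt2 → ℝ} {p : Pt4}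
    (hΓ : ∀ l k i j, DifferentiableAt ℝ (pd2 l (Γ k i j)) (bpt p))
    (hQ : ∀ l i j, DifferentiableAt ℝ (pd2 l (Q i j)) (bpt p)) (l i j : Fin 2) :
    ∃ u, HasPD (blC Γ Q l i j) u (fun n => -pd2 l (Γ n i j) (bpt p)) p := by
  refine ⟨_, HasPD.congr' ((((HasPD.base_comp (hΓ l 0 i j)).mul (HasPD.fib 0 p)).add
    ((HasPD.base_comp (hΓ l 1 i j)).mul (HasPD.fib 1 p))).neg.add
    (HasPD.base_comp (hQ l i j))) (fun _ => rfl) ?_⟩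
  intro n; fin_cases n <;> simp [kd]

lemma blH_hasPD {Γ : Conn} {Q : Fin 2 → Fin 2 → Pt2 → ℝ} {Λ : ℝ} {p : Pt4}
    (hΓ : ∀ k i j, DifferentiableAt ℝ (Γ k i j) (bpt p))
    (hQ : ∀ i j, DifferentiableAt ℝ (Q i j) (bpt p))
    (hΓ' : ∀ l k i j, DifferentiableAt ℝ (pd2 l (Γ k i j)) (bpt p))
    (hQ' : ∀ l i j, DifferentiableAt ℝ (pd2 l (Q i j)) (bpt p)) (k i j : Fin 2) :
    ∃ u, HasPD (blH Γ Q Λ k i j) u (fun n =>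
      -pd2 i (Γ n k j) (bpt p) - pd2 j (Γ n i k) (bpt p) + pd2 k (Γ n i j) (bpt p)
      + 2 * (blA Γ Q Λ k 0 p * (Λ * (kd 0 i * kd n j + kd 0 j * kd n i))
        + blB Γ Λ 0 i j p * blB Γ Λ n k 0 p
        + blA Γ Q Λ k 1 p * (Λ * (kd 1 i * kd n j + kd 1 j * kd n i))
        + blB Γ Λ 1 i j p * blB Γ Λ n k 1 p)) p := by
  obtain ⟨u1, h1⟩ := blC_hasPD hΓ' hQ' i k j
  obtain ⟨u2, h2⟩ := blC_hasPD hΓ' hQ' j i k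
  obtain ⟨u3, h3⟩ := blC_hasPD hΓ' hQ' k i j
  refine ⟨_, HasPD.congr' (((h1.add h2).sub h3).add ((HasPD.const 2 p).mul
    (((blA_hasPD (Λ := Λ) hΓ hQ k 0).mul (blB_hasPD (Λ := Λ) hΓ 0 i j)).add
     ((blA_hasPD (Λ := Λ) hΓ hQ k 1).mul (blB_hasPD (Λ := Λ) hΓ 1 i j))))) (fun _ => rfl) ?_⟩
  intro n; ring

/-- The metric with blocks. -/
def blG (Γ : Conn) (Q : Fin 2 → Fin 2 → Pt2 → ℝ) (Λ : ℝ) (p : Pt4) : Matrix (Fin 4) (Fin 4) ℝ :=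
  !![blA Γ Q Λ 0 0 p, blA Γ Q Λ 0 1 p, 1/2, 0;
     blA Γ Q Λ 1 0 p, blA Γ Q Λ 1 1 p, 0, 1/2;
     1/2, 0, 0, 0;
     0, 1/2, 0, 0]

lemma blockInv (a b c d : ℝ) :
    (!![a, b, 1/2, 0; c, d, 0, 1/2; 1/2, 0, 0, 0; 0, 1/2, 0, 0] : Matrix (Fin 4) (Fin 4) ℝ)⁻¹ =
      !![0, 0, 2, 0; 0, 0, 0, 2; 2, 0, -4*a, -4*b; 0, 2, -4*c, -4*d] := by
  apply Matrix.inv_eq_right_inv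
  ext i j
  fin_cases i <;> fin_cases j <;> simp [Matrix.mul_apply, Fin.sum_univ_four] <;> ring

lemma blockDet (a b c d : ℝ) :
    (!![a, b, 1/2, 0; c, d, 0, 1/2; 1/2, 0, 0, 0; 0, 1/2, 0, 0] : Matrix (Fin 4) (Fin 4) ℝ).det
      ≠ 0 := by
  have h : (!![a, b, 1/2, 0; c, d, 0, 1/2; 1/2, 0, 0, 0; 0, 1/2, 0, 0] :
      Matrix (Fin 4) (Fin 4) ℝ) *
      !![0, 0, 2, 0; 0, 0, 0, 2; 2, 0, -4*a, -4*b; 0, 2, -4*c, -4*d] = 1 := by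
    ext i j
    fin_cases i <;> fin_cases j <;> simp [Matrix.mul_apply, Fin.sum_univ_four] <;> ring
  exact Matrix.det_ne_zero_of_right_inverse h

section entries
variable (Γ : Conn) (Q : Fin 2 → Fin 2 → Pt2 → ℝ) (Λ : ℝ) (q : Pt4) (i j : Fin 2)

lemma blG_xx : blG Γ Q Λ q (ex4 i) (ex4 j) = blA Γ Q Λ i j q := by
  fin_cases i <;> fin_cases j <;> rfl
lemma blG_xf : blG Γ Q Λ q (ex4 i) (ef4 j) = kd i j / 2 := by
  fin_cases i <;> fin_cases j <;> simp [blG, ex4, ef4, kd]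
lemma blG_fx : blG Γ Q Λ q (ef4 i) (ex4 j) = kd i j / 2 := by
  fin_cases i <;> fin_cases j <;> simp [blG, ex4, ef4, kd]
lemma blG_ff : blG Γ Q Λ q (ef4 i) (ef4 j) = 0 := by
  fin_cases i <;> fin_cases j <;> simp [blG, ef4]
lemma blI_xx : (blG Γ Q Λ q)⁻¹ (ex4 i) (ex4 j) = 0 := by
  rw [blG, blockInv]; fin_cases i <;> fin_cases j <;> simp [ex4]
lemma blI_xf : (blG Γ Q Λ q)⁻¹ (ex4 i) (ef4 j) = 2 * kd i j := by
  rw [blG, blockInv]; fin_cases i <;> fin_cases j <;> simp [ex4, ef4, kd]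
lemma blI_fx : (blG Γ Q Λ q)⁻¹ (ef4 i) (ex4 j) = 2 * kd i j := by
  rw [blG, blockInv]; fin_cases i <;> fin_cases j <;> simp [ex4, ef4, kd]
lemma blI_ff : (blG Γ Q Λ q)⁻¹ (ef4 i) (ef4 j) = -4 * blA Γ Q Λ i j q := by
  rw [blG, blockInv]; fin_cases i <;> fin_cases j <;> simp [ef4]
end entries

lemma sum4 (f : Fin 4 → ℝ) : ∑ a, f a = f (ex4 0) + f (ex4 1) + f (ef4 0) + f (ef4 1) := by
  rw [Fin.sum_univ_four]; rfl

lemma pd4_const (a : Fin 4) (c : ℝ) (p : Pt4) : pd4 a (fun _ => c) p = 0 := by simp [pd4]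

section chris
variable {Γ : Conn} {Q : Fin 2 → Fin 2 → Pt2 → ℝ} {Λ : ℝ} {p : Pt4}
    (hΓ : ∀ k i j, DifferentiableAt ℝ (Γ k i j) (bpt p))
    (hQ : ∀ i j, DifferentiableAt ℝ (Q i j) (bpt p)) (i j k : Fin 2)

lemma pdA_x (l : Fin 2) (hΓ : ∀ k i j, DifferentiableAt ℝ (Γ k i j) (bpt p))
    (hQ : ∀ i j, DifferentiableAt ℝ (Q i j) (bpt p)) :
    pd4 (ex4 l) (fun q => blA Γ Q Λ i j q) p = blC Γ Q l i j p :=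
  (blA_hasPD hΓ hQ i j).base l
lemma pdA_f (l : Fin 2) (hΓ : ∀ k i j, DifferentiableAt ℝ (Γ k i j) (bpt p))
    (hQ : ∀ i j, DifferentiableAt ℝ (Q i j) (bpt p)) :
    pd4 (ef4 l) (fun q => blA Γ Q Λ i j q) p = blB Γ Λ l i j p :=
  (blA_hasPD hΓ hQ i j).fibre l

lemma chris_xxx (hΓ : ∀ k i j, DifferentiableAt ℝ (Γ k i j) (bpt p))
    (hQ : ∀ i j, DifferentiableAt ℝ (Q i j) (bpt p)) :
    chris4 (blG Γ Q Λ) (ex4 k) (ex4 i) (ex4 j) p = - blB Γ Λ k i j p := by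
  simp only [chris4, sum4, blG_xx, blG_xf, blG_fx, blG_ff, blI_xx, blI_xf, pd4_const,
    pdA_x _ _ _ hΓ hQ, pdA_f _ _ _ hΓ hQ]
  fin_cases k <;> simp [kd]

lemma chris_xfx (hΓ : ∀ k i j, DifferentiableAt ℝ (Γ k i j) (bpt p))
    (hQ : ∀ i j, DifferentiableAt ℝ (Q i j) (bpt p)) :
    chris4 (blG Γ Q Λ) (ex4 k) (ef4 i) (ex4 j) p = 0 := by
  simp only [chris4, sum4, blG_xx, blG_xf, blG_fx, blG_ff, blI_xx, blI_xf, pd4_const,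
    pdA_x _ _ _ hΓ hQ, pdA_f _ _ _ hΓ hQ]
  ring

lemma chris_xxf (hΓ : ∀ k i j, DifferentiableAt ℝ (Γ k i j) (bpt p))
    (hQ : ∀ i j, DifferentiableAt ℝ (Q i j) (bpt p)) :
    chris4 (blG Γ Q Λ) (ex4 k) (ex4 i) (ef4 j) p = 0 := by
  simp only [chris4, sum4, blG_xx, blG_xf, blG_fx, blG_ff, blI_xx, blI_xf, pd4_const,
    pdA_x _ _ _ hΓ hQ, pdA_f _ _ _ hΓ hQ]
  ring

lemma chris_xff : chris4 (blG Γ Q Λ) (ex4 k) (ef4 i) (ef4 j) p = 0 := by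
  simp only [chris4, sum4, blG_xf, blG_fx, blG_ff, blI_xx, blI_xf, pd4_const]
  ring

lemma chris_fff : chris4 (blG Γ Q Λ) (ef4 k) (ef4 i) (ef4 j) p = 0 := by
  simp only [chris4, sum4, blG_xf, blG_fx, blG_ff, blI_fx, blI_ff, pd4_const]
  ring

lemma chris_fxx (hΓ : ∀ k i j, DifferentiableAt ℝ (Γ k i j) (bpt p))
    (hQ : ∀ i j, DifferentiableAt ℝ (Q i j) (bpt p)) :
    chris4 (blG Γ Q Λ) (ef4 k) (ex4 i) (ex4 j) p = blH Γ Q Λ k i j p := by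
  simp only [chris4, sum4, blG_xx, blG_xf, blG_fx, blG_ff, blI_fx, blI_ff, pd4_const,
    pdA_x _ _ _ hΓ hQ, pdA_f _ _ _ hΓ hQ, blH]
  fin_cases k <;> simp [kd] <;> ring

lemma chris_ffx (hΓ : ∀ k i j, DifferentiableAt ℝ (Γ k i j) (bpt p))
    (hQ : ∀ i j, DifferentiableAt ℝ (Q i j) (bpt p)) :
    chris4 (blG Γ Q Λ) (ef4 k) (ef4 i) (ex4 j) p = blB Γ Λ i k j p := by
  simp only [chris4, sum4, blG_xx, blG_xf, blG_fx, blG_ff, blI_fx, blI_ff, pd4_const,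
    pdA_x _ _ _ hΓ hQ, pdA_f _ _ _ hΓ hQ]
  fin_cases k <;> simp [kd]

lemma chris_fxf (hΓ : ∀ k i j, DifferentiableAt ℝ (Γ k i j) (bpt p))
    (hQ : ∀ i j, DifferentiableAt ℝ (Q i j) (bpt p)) :
    chris4 (blG Γ Q Λ) (ef4 k) (ex4 i) (ef4 j) p = blB Γ Λ j i k p := by
  simp only [chris4, sum4, blG_xx, blG_xf, blG_fx, blG_ff, blI_fx, blI_ff, pd4_const,
    pdA_x _ _ _ hΓ hQ, pdA_f _ _ _ hΓ hQ]
  fin_cases k <;> simp [kd]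
end chris

/-- The symmetrized Schouten tensor divided by `Λ`. -/
def schQ (Γ : Conn) (Λ : ℝ) (i j : Fin 2) (x : Pt2) : ℝ :=
  Λ⁻¹ * ((schouten Γ i j x + schouten Γ j i x) / 2)

lemma einsteinLift_eq (Γ : Conn) (Λ : ℝ) : einsteinLift Γ Λ = blG Γ (schQ Γ Λ) Λ := by
  funext p
  simp only [einsteinLift, blG, blA, schQ, Fin.sum_univ_two]

lemma contDiffAt_pd2 {f : Pt2 → ℝ} {x : Pt2} (i : Fin 2)
    (h : ContDiffAt ℝ (⊤ : ℕ∞) f x) : ContDiffAt ℝ (⊤ : ℕ∞) (pd2 i f) x := by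
  have h1 : ContDiffAt ℝ (⊤ : ℕ∞) (fderiv ℝ f) x := h.fderiv_right (by simp)
  exact h1.clm_apply contDiffAt_const

lemma contDiffAt_schQ {Γ : Conn} {x : Pt2} (h : ∀ k i j, ContDiffAt ℝ (⊤ : ℕ∞) (Γ k i j) x)
    (Λ : ℝ) (i j : Fin 2) : ContDiffAt ℝ (⊤ : ℕ∞) (schQ Γ Λ i j) x := by
  have hc : ∀ i j k l, ContDiffAt ℝ (⊤ : ℕ∞) (curv Γ i j k l) x := by
    intro i j k l
    refine ((contDiffAt_pd2 i (h _ _ _)).sub (contDiffAt_pd2 j (h _ _ _))).add ?_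
    exact ContDiffAt.sum fun m _ => ((h _ _ _).mul (h _ _ _)).sub ((h _ _ _).mul (h _ _ _))
  have hr : ∀ i j, ContDiffAt ℝ (⊤ : ℕ∞) (ricciT Γ i j) x := fun i j =>
    ContDiffAt.sum fun m _ => hc _ _ _ _
  have hs : ∀ i j, ContDiffAt ℝ (⊤ : ℕ∞) (schouten Γ i j) x := fun i j =>
    (((hr i j).add (hr j i)).div_const 2).add (((hr i j).sub (hr j i)).div_const 6)
  exact contDiffAt_const.mul (((hs i j).add (hs j i)).div_const 2)

lemma fin4_cases (b : Fin 4) : (∃ i, b = ex4 i) ∨ ∃ i, b = ef4 i := by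
  fin_cases b
  · exact Or.inl ⟨0, rfl⟩
  · exact Or.inl ⟨1, rfl⟩
  · exact Or.inr ⟨0, rfl⟩
  · exact Or.inr ⟨1, rfl⟩

/-- The Einstein lift metric of a projective surface with parameter `Λ ≠ 0` is
nondegenerate and Einstein: `Ric(g) = 6Λ·g`, so its scalar curvature is the nonzero
constant `24Λ`. -/
theorem einsteinLift_isEinstein
    (U : Set Pt2) (hUopen : IsOpen U)
    (Γ : Conn) (hΓsmooth : ∀ k i j, ContDiffOn ℝ (⊤ : ℕ∞) (Γ k i j) U)
    (hΓsym : ∀ k i j, ∀ x ∈ U, Γ k i j x = Γ k j i x)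
    (Λ : ℝ) (hΛ : Λ ≠ 0)
    (p : Pt4) (hp : bpt p ∈ U) :
    (einsteinLift Γ Λ p).det ≠ 0 ∧
      ∀ b d, ric4 (einsteinLift Γ Λ) b d p = 6 * Λ * einsteinLift Γ Λ p b d := by
  rw [einsteinLift_eq]
  refine ⟨blockDet _ _ _ _, ?_⟩
  have hc : ∀ x ∈ U, ∀ k i j, ContDiffAt ℝ (⊤ : ℕ∞) (Γ k i j) x := fun x hx k i j =>
    (hΓsmooth k i j).contDiffAt (hUopen.mem_nhds hx)
  have hd : ∀ x ∈ U, ∀ k i j, DifferentiableAt ℝ (Γ k i j) x := fun x hx k i j =>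
    (hc x hx k i j).differentiableAt (by simp)
  have hq : ∀ x ∈ U, ∀ i j, DifferentiableAt ℝ (schQ Γ Λ i j) x := fun x hx i j =>
    (contDiffAt_schQ (hc x hx) Λ i j).differentiableAt (by simp)
  have hd' : ∀ l k i j, DifferentiableAt ℝ (pd2 l (Γ k i j)) (bpt p) := fun l k i j =>
    (contDiffAt_pd2 l (hc _ hp k i j)).differentiableAt (by simp)
  have hq' : ∀ l i j, DifferentiableAt ℝ (pd2 l (schQ Γ Λ i j)) (bpt p) := fun l i j =>
    (contDiffAt_pd2 l (contDiffAt_schQ (hc _ hp) Λ i j)).differentiableAt (by simp)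
  have hev : ∀ᶠ q in nhds p, bpt q ∈ U := by
    have : Continuous bpt := by rw [bpt_eq]; exact bptL.continuous
    exact this.continuousAt.eventually (hUopen.mem_nhds hp)
  have hsp : ∀ k, Γ k 1 0 (bpt p) = Γ k 0 1 (bpt p) := fun k => hΓsym k 1 0 _ hp
  have hsd : ∀ l k, pd2 l (Γ k 1 0) (bpt p) = pd2 l (Γ k 0 1) (bpt p) := by
    intro l k
    have : Γ k 1 0 =ᶠ[nhds (bpt p)] Γ k 0 1 := by
      filter_upwards [hUopen.mem_nhds hp] with x hx using hΓsym k 1 0 x hx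
    rw [pd2, pd2, this.fderiv_eq]
  set Q := schQ Γ Λ with hQdef
  -- partial derivatives of the Christoffel symbols
  have D1 : ∀ k i j, HasPD (fun q => chris4 (blG Γ Q Λ) (ex4 k) (ex4 i) (ex4 j) q) _ _ p :=
    fun k i j => (blB_hasPD (Λ := Λ) (hd _ hp) k i j).neg.of_eventuallyEq
      (hev.mono fun q hq1 => chris_xxx _ _ _ (hd _ hq1) (hq _ hq1))
  have D2 : ∀ k i j, HasPD (fun q => chris4 (blG Γ Q Λ) (ex4 k) (ef4 i) (ex4 j) q) _ _ p :=
    fun k i j => (HasPD.const 0 p).of_eventuallyEq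
      (hev.mono fun q hq1 => chris_xfx _ _ _ (hd _ hq1) (hq _ hq1))
  have D3 : ∀ k i j, HasPD (fun q => chris4 (blG Γ Q Λ) (ex4 k) (ex4 i) (ef4 j) q) _ _ p :=
    fun k i j => (HasPD.const 0 p).of_eventuallyEq
      (hev.mono fun q hq1 => chris_xxf _ _ _ (hd _ hq1) (hq _ hq1))
  have D4 : ∀ k i j, HasPD (fun q => chris4 (blG Γ Q Λ) (ex4 k) (ef4 i) (ef4 j) q) _ _ p :=
    fun k i j => (HasPD.const 0 p).of_eventuallyEq
      (hev.mono fun q hq1 => chris_xff _ _ _)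
  have D5 : ∀ k i j, HasPD (fun q => chris4 (blG Γ Q Λ) (ef4 k) (ef4 i) (ef4 j) q) _ _ p :=
    fun k i j => (HasPD.const 0 p).of_eventuallyEq
      (hev.mono fun q hq1 => chris_fff _ _ _)
  have D6 : ∀ k i j, HasPD (fun q => chris4 (blG Γ Q Λ) (ef4 k) (ef4 i) (ex4 j) q) _ _ p :=
    fun k i j => (blB_hasPD (Λ := Λ) (hd _ hp) i k j).of_eventuallyEq
      (hev.mono fun q hq1 => chris_ffx _ _ _ (hd _ hq1) (hq _ hq1))
  have D7 : ∀ k i j, HasPD (fun q => chris4 (blG Γ Q Λ) (ef4 k) (ex4 i) (ef4 j) q) _ _ p :=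
    fun k i j => (blB_hasPD (Λ := Λ) (hd _ hp) j i k).of_eventuallyEq
      (hev.mono fun q hq1 => chris_fxf _ _ _ (hd _ hq1) (hq _ hq1))
  have D8 : ∀ k i j, ∃ u, HasPD (fun q => chris4 (blG Γ Q Λ) (ef4 k) (ex4 i) (ex4 j) q) u _ p :=
    fun k i j => (blH_hasPD (Λ := Λ) (hd _ hp) (hq _ hp) hd' hq' k i j).imp fun u hu =>
      hu.of_eventuallyEq
      (hev.mono fun q hq1 => chris_fxx _ _ _ (hd _ hq1) (hq _ hq1))
  choose u8 D8 using D8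
  have hdp := hd _ hp
  have hqp := hq _ hp
  intro b d
  rcases fin4_cases b with ⟨i, rfl⟩ | ⟨i, rfl⟩ <;> rcases fin4_cases d with ⟨j, rfl⟩ | ⟨j, rfl⟩
  · simp only [ric4, sum4, (D1 _ _ _).base, (D8 _ _ _).fibre, (D6 _ _ _).base,
      chris_xxx _ _ _ hdp hqp, chris_xfx _ _ _ hdp hqp, chris_xxf _ _ _ hdp hqp, chris_xff,
      chris_fff, chris_ffx _ _ _ hdp hqp, chris_fxf _ _ _ hdp hqp, chris_fxx _ _ _ hdp hqp, blG_xx]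
    simp only [hQdef, blA, blB, schQ, schouten, ricciT, curv, Fin.sum_univ_two]
    fin_cases i <;> fin_cases j <;> simp [kd, hsp, hsd] <;> field_simp <;> ring
  · simp only [ric4, sum4, (D3 _ _ _).base, (D7 _ _ _).fibre, (D5 _ _ _).base,
      chris_xxx _ _ _ hdp hqp, chris_xfx _ _ _ hdp hqp, chris_xxf _ _ _ hdp hqp, chris_xff,
      chris_fff, chris_ffx _ _ _ hdp hqp, chris_fxf _ _ _ hdp hqp, chris_fxx _ _ _ hdp hqp, blG_xf,
      pd4_const]
    simp only [blB]
    fin_cases i <;> fin_cases j <;> simp [kd] <;> ring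
  · simp only [ric4, sum4, (D2 _ _ _).base, (D6 _ _ _).fibre, (D1 _ _ _).fibre,
      chris_xxx _ _ _ hdp hqp, chris_xfx _ _ _ hdp hqp, chris_xxf _ _ _ hdp hqp, chris_xff,
      chris_fff, chris_ffx _ _ _ hdp hqp, chris_fxf _ _ _ hdp hqp, chris_fxx _ _ _ hdp hqp, blG_fx,
      pd4_const]
    simp only [blB]
    fin_cases i <;> fin_cases j <;> simp [kd] <;> ring
  · simp only [ric4, sum4, (D4 _ _ _).base, (D5 _ _ _).fibre, (D3 _ _ _).fibre,
      chris_xxx _ _ _ hdp hqp, chris_xfx _ _ _ hdp hqp, chris_xxf _ _ _ hdp hqp, chris_xff,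
      chris_fff, chris_ffx _ _ _ hdp hqp, chris_fxf _ _ _ hdp hqp, chris_fxx _ _ _ hdp hqp, blG_ff,
      pd4_const]
    ring
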